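/- Let f, g: S^1 → ℝ^2 be continuous. If there exist generic functions f', g': S^1 → ℝ^2 such that H_0^{u,v}(s∘f') = H_0^{u,v}(s∘g') for every (u,v) ∈ Δ^+ and every s ∈ Σ_2, then there exists a C^1-diffeomorphism h: S^1 → S^1 such that ‖g∘h − f‖_∞ ≤ ‖g − g'‖_∞ + ‖f' − f‖_∞. -/

import Mathlib

open Set Real Filter Topology

noncomputable section

abbrev Circ := AddCircle (2 * π)

def liftOf (F : Circ → ℝ × ℝ) : ℝ → ℝ × ℝ := fun t => F (t : Circ)

def IsC1 (F : Circ → ℝ × ℝ) : Prop := ContDiff ℝ 1 (liftOf F)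

def tangentAt (F : Circ → ℝ × ℝ) (t : ℝ) : Submodule ℝ (ℝ × ℝ) :=
  Submodule.span ℝ {deriv (liftOf F) t}

def Generic (F : Circ → ℝ × ℝ) : Prop :=
  IsC1 F ∧ (∀ t : ℝ, deriv (liftOf F) t ≠ 0) ∧
  {p : ℝ × ℝ | ∃ x y : Circ, x ≠ y ∧ F x = p ∧ F y = p}.Finite ∧
  (∀ p : ℝ × ℝ, (∃ x y : Circ, x ≠ y ∧ F x = p ∧ F y = p) →
    ∃ x y : Circ, x ≠ y ∧ {z : Circ | F z = p} = {x, y}) ∧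
  (∀ t₁ t₂ : ℝ, liftOf F t₁ = liftOf F t₂ → tangentAt F t₁ = tangentAt F t₂ →
    (t₁ : Circ) = (t₂ : Circ))

def Dset (u : ℝ × ℝ) : Set (ℝ × ℝ) := {w | w.1 ≤ u.1 ∧ w.2 ≤ u.2}

def persBetti (F : Circ → ℝ × ℝ) (u v : ℝ × ℝ) : ℕ :=
  ((fun x => connectedComponentIn (F ⁻¹' Dset v) x) '' (F ⁻¹' Dset u)).ncard

def Sigma2 : Set ((ℝ × ℝ) → (ℝ × ℝ)) :=
  {id, fun p => (-p.1, p.2), fun p => (p.1, -p.2), fun p => (-p.1, -p.2)}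

def CircleDiffeo (H : Circ → Circ) : Prop :=
  ∃ h : ℝ → ℝ, ContDiff ℝ 1 h ∧ (∀ t, deriv h t ≠ 0) ∧
    ((∀ t, h (t + 2 * π) = h t + 2 * π) ∨ (∀ t, h (t + 2 * π) = h t - 2 * π)) ∧
    (∀ t : ℝ, H (t : Circ) = ((h t : ℝ) : Circ))

def C1dist (F G : Circ → ℝ × ℝ) : ℝ :=
  ⨆ t : ℝ, (‖liftOf F t - liftOf G t‖ + ‖deriv (liftOf F) t - deriv (liftOf G) t‖)

def cross (a b : ℝ × ℝ) : ℝ := a.1 * b.2 - a.2 * b.1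


instance factPi : Fact (0 < 2 * π) := ⟨by positivity⟩

instance lcCirc : LocallyConnectedSpace Circ := by
  have : LocallyPathConnectedSpace Circ :=
    (show IsQuotientMap ((↑) : ℝ → Circ) from isQuotientMap_quotient_mk').locallyPathConnectedSpace
  infer_instance

def cset (F : Circ → ℝ × ℝ) (u v : ℝ × ℝ) : Set (Set Circ) :=
  (fun x => connectedComponentIn (F ⁻¹' Dset v) x) '' (F ⁻¹' Dset u)

lemma isClosed_Dset (u : ℝ × ℝ) : IsClosed (Dset u) :=
  (isClosed_le continuous_fst continuous_const).inter (isClosed_le continuous_snd continuous_const)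

lemma cset_finite (F : Circ → ℝ × ℝ) (hF : Continuous F) (u v : ℝ × ℝ)
    (h1 : u.1 < v.1) (h2 : u.2 < v.2) : (cset F u v).Finite := by
  set O : Set Circ := F ⁻¹' {w | w.1 < v.1 ∧ w.2 < v.2} with hO
  have hOo : IsOpen O := ((isOpen_lt continuous_fst continuous_const).inter
    (isOpen_lt continuous_snd continuous_const)).preimage hF
  have hOD : O ⊆ F ⁻¹' Dset v := fun x hx => ⟨hx.1.le, hx.2.le⟩
  have hK : IsCompact (F ⁻¹' Dset u) := ((isClosed_Dset u).preimage hF).isCompact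
  have huO : F ⁻¹' Dset u ⊆ O := fun x hx => ⟨hx.1.trans_lt h1, hx.2.trans_lt h2⟩
  obtain ⟨t, ht, hc⟩ := hK.elim_nhds_subcover (fun x => connectedComponentIn O x)
    (fun x hx => hOo.connectedComponentIn.mem_nhds (mem_connectedComponentIn (huO hx)))
  refine (t.finite_toSet.image (fun x => connectedComponentIn (F ⁻¹' Dset v) x)).subset ?_
  rintro _ ⟨x, hx, rfl⟩
  have := hc hx
  simp only [mem_iUnion] at this
  obtain ⟨y, hy, hxy⟩ := this
  refine ⟨y, hy, ?_⟩
  have hyO := huO (ht y hy)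
  exact connectedComponentIn_eq (isPreconnected_connectedComponentIn.subset_connectedComponentIn
    (mem_connectedComponentIn hyO) ((connectedComponentIn_subset _ _).trans hOD) hxy)

lemma cset_mono (F : Circ → ℝ × ℝ) (u w v : ℝ × ℝ) (h1 : u.1 ≤ w.1) (h2 : u.2 ≤ w.2) :
    cset F u v ⊆ cset F w v :=
  image_mono fun _ hx => ⟨hx.1.trans h1, hx.2.trans h2⟩

lemma count_contra (F G : Circ → ℝ × ℝ) (hF : Continuous F) (hG : Continuous G)
    (a u v : ℝ × ℝ) (ha1 : a.1 < u.1) (ha2 : a.2 < u.2) (hu1 : u.1 < v.1) (hu2 : u.2 < v.2)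
    (C : Set Circ) (hC : C = F ⁻¹' Dset v ∩ {x | a.1 < (F x).1 ∧ a.2 < (F x).2})
    (hCc : IsClosed C) (hCp : IsPreconnected C) (x0 : Circ) (hx0 : x0 ∈ C)
    (hxu : x0 ∈ F ⁻¹' Dset u)
    (hGa : ∀ x, G x ∈ Dset u → (G x).1 ≤ a.1 ∨ (G x).2 ≤ a.2)
    (h : ∀ u v : ℝ × ℝ, u.1 < v.1 → u.2 < v.2 → persBetti F u v = persBetti G u v) : False := by
  have hv1 := ha1.trans hu1
  have hv2 := ha2.trans hu2
  have e0 := h u v hu1 hu2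
  have e1 := h (a.1, u.2) v hv1 hu2
  have e2 := h (u.1, a.2) v hu1 hv2
  have e3 := h a v hv1 hv2
  have fF := fun w h1 h2 => cset_finite F hF w v h1 h2
  have fG := fun w h1 h2 => cset_finite G hG w v h1 h2
  have bF1 := fF (a.1, u.2) hv1 hu2
  have bF2 := fF (u.1, a.2) hu1 hv2
  have bG1 := fG (a.1, u.2) hv1 hu2
  have bG2 := fG (u.1, a.2) hu1 hv2
  change (cset F _ v).ncard = (cset G _ v).ncard at e0 e1 e2 e3
  have iF := ncard_union_add_ncard_inter (cset F (a.1, u.2) v) (cset F (u.1, a.2) v)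
    (fF _ hv1 hu2) (fF _ hu1 hv2)
  have iG := ncard_union_add_ncard_inter (cset G (a.1, u.2) v) (cset G (u.1, a.2) v)
    (fG _ hv1 hu2) (fG _ hu1 hv2)
  have g1 : (cset G u v).ncard ≤ (cset G (a.1, u.2) v ∪ cset G (u.1, a.2) v).ncard := by
    refine ncard_le_ncard ?_ (bG1.union bG2)
    rintro _ ⟨x, hx, rfl⟩
    rcases hGa x hx with h' | h'
    · exact Or.inl ⟨x, ⟨h', hx.2⟩, rfl⟩
    · exact Or.inr ⟨x, ⟨hx.1, h'⟩, rfl⟩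
  have g2 : (cset G a v).ncard ≤ (cset G (a.1, u.2) v ∩ cset G (u.1, a.2) v).ncard := by
    refine ncard_le_ncard (subset_inter ?_ ?_) (bG1.inter_of_left _)
    · exact cset_mono _ _ _ _ le_rfl ha2.le
    · exact cset_mono _ _ _ _ ha1.le le_rfl
  -- components of F
  have hCsub : C ⊆ F ⁻¹' Dset v := by rw [hC]; exact inter_subset_left
  have key : ∀ S : Set Circ, IsPreconnected S → S ⊆ F ⁻¹' Dset v → (S ∩ C).Nonempty → S ⊆ C := by
    intro S hS hSv hne
    have hcl : IsClosed (F ⁻¹' ({w | w.1 ≤ a.1} ∪ {w | w.2 ≤ a.2})) :=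
      (((isClosed_le continuous_fst continuous_const).union
        (isClosed_le continuous_snd continuous_const))).preimage hF
    by_contra hn
    obtain ⟨y, hyS, hyC⟩ := not_subset.1 hn
    have cov : ∀ x ∈ S, x ∉ C → x ∈ F ⁻¹' ({w | w.1 ≤ a.1} ∪ {w | w.2 ≤ a.2}) := by
      intro x hx hxC
      by_contra hh
      apply hxC
      rw [hC]
      simp only [mem_preimage, mem_union, mem_ofPred_eq, not_or, not_le] at hh
      exact ⟨hSv hx, hh⟩
    obtain ⟨z, hz, hzC, hz2⟩ := isPreconnected_closed_iff.1 hS C _ hCc hcl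
      (fun x hx => by
        by_cases hxC : x ∈ C
        · exact Or.inl hxC
        · exact Or.inr (cov x hx hxC)) hne ⟨y, hyS, cov y hyS hyC⟩
    rw [hC] at hzC
    rcases hz2 with h' | h'
    · exact absurd hzC.2.1 (not_lt.2 h')
    · exact absurd hzC.2.2 (not_lt.2 h')
  have compC : ∀ x ∈ C, connectedComponentIn (F ⁻¹' Dset v) x = C := by
    intro x hx
    refine Subset.antisymm (key _ isPreconnected_connectedComponentIn
      (connectedComponentIn_subset _ _) ⟨x, mem_connectedComponentIn (hCsub hx), hx⟩) ?_
    exact hCp.subset_connectedComponentIn hx hCsub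
  have f1 : (cset F (a.1, u.2) v ∪ cset F (u.1, a.2) v).ncard + 1 ≤ (cset F u v).ncard := by
    have hni : C ∉ cset F (a.1, u.2) v ∪ cset F (u.1, a.2) v := by
      rintro (⟨x, hx, hxC⟩ | ⟨x, hx, hxC⟩)
      · have hxv : x ∈ F ⁻¹' Dset v := ⟨hx.1.trans hv1.le, hx.2.trans hu2.le⟩
        have : x ∈ C := hxC ▸ mem_connectedComponentIn hxv
        rw [hC] at this
        exact absurd this.2.1 (not_lt.2 hx.1)
      · have hxv : x ∈ F ⁻¹' Dset v := ⟨hx.1.trans hu1.le, hx.2.trans hv2.le⟩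
        have : x ∈ C := hxC ▸ mem_connectedComponentIn hxv
        rw [hC] at this
        exact absurd this.2.2 (not_lt.2 hx.2)
    rw [← ncard_insert_of_notMem hni (bF1.union bF2)]
    refine ncard_le_ncard ?_ (fF _ hu1 hu2)
    refine insert_subset ⟨x0, hxu, compC x0 hx0⟩ (union_subset ?_ ?_)
    · exact cset_mono _ _ _ _ ha1.le le_rfl
    · exact cset_mono _ _ _ _ le_rfl ha2.le
  have f2 : (cset F (a.1, u.2) v ∩ cset F (u.1, a.2) v).ncard ≤ (cset F a v).ncard := by
    refine ncard_le_ncard ?_ (fF _ hv1 hv2)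
    rintro S ⟨⟨x, hx, rfl⟩, ⟨y, hy, hxy⟩⟩
    simp only at hxy
    set S := connectedComponentIn (F ⁻¹' Dset v) x with hS
    have hxv : x ∈ F ⁻¹' Dset v := ⟨hx.1.trans hv1.le, hx.2.trans hu2.le⟩
    have hyv : y ∈ F ⁻¹' Dset v := ⟨hy.1.trans hu1.le, hy.2.trans hv2.le⟩
    have hxS : x ∈ S := mem_connectedComponentIn hxv
    have hyS : y ∈ S := hxy ▸ mem_connectedComponentIn hyv
    have hSp : IsPreconnected S := isPreconnected_connectedComponentIn
    have hSv : S ⊆ F ⁻¹' Dset v := connectedComponentIn_subset _ _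
    have hSC : ∀ z ∈ S, z ∉ C := by
      intro z hz hzC
      have := key S hSp hSv ⟨z, hz, hzC⟩ hxS
      rw [hC] at this
      exact absurd this.2.1 (not_lt.2 hx.1)
    obtain ⟨z, hz, hz1, hz2⟩ := isPreconnected_closed_iff.1 hSp
      (F ⁻¹' {w | w.1 ≤ a.1}) (F ⁻¹' {w | w.2 ≤ a.2})
      ((isClosed_le continuous_fst continuous_const).preimage hF)
      ((isClosed_le continuous_snd continuous_const).preimage hF)
      (fun z hz => by
        by_contra hh
        simp only [mem_preimage, mem_union, mem_ofPred_eq, not_or, not_le] at hh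
        exact hSC z hz (by rw [hC]; exact ⟨hSv hz, hh⟩))
      ⟨x, hxS, hx.1⟩ ⟨y, hyS, hy.2⟩
    exact ⟨z, ⟨hz1, hz2⟩, (connectedComponentIn_eq hz).symm⟩
  omega

lemma image_contra (F G : Circ → ℝ × ℝ) (hF : Continuous F) (hG : Continuous G)
    (t0 δ : ℝ) (hδ : 0 < δ)
    (hm : StrictMonoOn (fun t : ℝ => (F (t : Circ)).1) (Icc (t0 - δ) (t0 + δ)))
    (ha : StrictAntiOn (fun t : ℝ => (F (t : Circ)).2) (Icc (t0 - δ) (t0 + δ)))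
    (hs : ∀ x : Circ, F x = F (t0 : Circ) → x = (t0 : Circ))
    (hn : F (t0 : Circ) ∉ range G)
    (h : ∀ u v : ℝ × ℝ, u.1 < v.1 → u.2 < v.2 → persBetti F u v = persBetti G u v) : False := by
  set p := F (t0 : Circ) with hp
  have hcoe : Continuous ((↑) : ℝ → Circ) := AddCircle.continuous_mk' _
  have hopen : IsOpenMap ((↑) : ℝ → Circ) := QuotientAddGroup.isOpenMap_coe
  set E : Set Circ := (((↑) : ℝ → Circ) '' Ioo (t0 - δ) (t0 + δ))ᶜ with hE
  have hEc : IsClosed E := (hopen _ isOpen_Ioo).isClosed_compl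
  have hU : IsOpen (F '' E ∪ range G)ᶜ :=
    (((hEc.isCompact.image hF).isClosed).union (isCompact_range hG).isClosed).isOpen_compl
  have hpU : p ∈ (F '' E ∪ range G)ᶜ := by
    rintro (⟨x, hx, hxp⟩ | h')
    · apply hx
      rw [hs x hxp]
      exact ⟨t0, ⟨by linarith, by linarith⟩, rfl⟩
    · exact hn h'
  obtain ⟨ε, hε, hball⟩ := Metric.isOpen_iff.1 hU p hpU
  have hfc : Continuous (fun t : ℝ => F (t : Circ)) := hF.comp hcoe
  obtain ⟨r', hr', hr'b⟩ := Metric.continuous_iff.1 hfc t0 (ε / 2) (by positivity)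
  obtain ⟨r, hr0, hrr, hrδ⟩ : ∃ r, 0 < r ∧ r < r' ∧ r < δ :=
    ⟨min r' δ / 2, by positivity, by have := min_le_left r' δ; linarith,
      by have := min_le_right r' δ; linarith⟩
  have near : ∀ t, |t - t0| ≤ r → |(F (t : Circ)).1 - p.1| < ε / 2 ∧ |(F (t : Circ)).2 - p.2| < ε / 2 := by
    intro t ht
    have := hr'b t (by rw [Real.dist_eq]; linarith)
    rw [Prod.dist_eq, max_lt_iff, Real.dist_eq, Real.dist_eq] at this
    exact this
  have nm := near (t0 - r) (by rw [show t0 - r - t0 = -r by ring, abs_neg, abs_of_pos hr0])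
  have np := near (t0 + r) (by rw [show t0 + r - t0 = r by ring, abs_of_pos hr0])
  simp only [abs_lt] at nm np
  have i0 : t0 ∈ Icc (t0 - δ) (t0 + δ) := ⟨by linarith, by linarith⟩
  have im : t0 - r ∈ Icc (t0 - δ) (t0 + δ) := ⟨by linarith, by linarith⟩
  have ip : t0 + r ∈ Icc (t0 - δ) (t0 + δ) := ⟨by linarith, by linarith⟩
  have m1 : (F ((t0 - r : ℝ) : Circ)).1 < p.1 := hm im i0 (by linarith)
  have m2 : p.1 < (F ((t0 + r : ℝ) : Circ)).1 := hm i0 ip (by linarith)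
  have n1 : p.2 < (F ((t0 - r : ℝ) : Circ)).2 := ha im i0 (by linarith)
  have n2 : (F ((t0 + r : ℝ) : Circ)).2 < p.2 := ha i0 ip (by linarith)
  have inball : ∀ w : ℝ × ℝ, w.1 ≤ (F ((t0 + r : ℝ) : Circ)).1 → w.2 ≤ (F ((t0 - r : ℝ) : Circ)).2 →
      (F ((t0 - r : ℝ) : Circ)).1 - ε / 4 < w.1 → (F ((t0 + r : ℝ) : Circ)).2 - ε / 4 < w.2 →
      w ∈ (F '' E ∪ range G)ᶜ := by
    intro w w1 w2 w3 w4
    apply hball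
    rw [Metric.mem_ball, Prod.dist_eq, max_lt_iff, Real.dist_eq, Real.dist_eq, abs_lt, abs_lt]
    refine ⟨⟨?_, ?_⟩, ?_, ?_⟩ <;> linarith [nm.1.1, nm.1.2, nm.2.1, nm.2.2, np.1.1, np.1.2, np.2.1, np.2.2]
  refine count_contra F G hF hG
    ((F ((t0 - r : ℝ) : Circ)).1 - ε / 4, (F ((t0 + r : ℝ) : Circ)).2 - ε / 4) p
    ((F ((t0 + r : ℝ) : Circ)).1, (F ((t0 - r : ℝ) : Circ)).2)
    (by simp only; linarith) (by simp only; linarith) m2 n1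
    (((↑) : ℝ → Circ) '' Icc (t0 - r) (t0 + r)) ?_
    (isCompact_Icc.image hcoe).isClosed (isPreconnected_Icc.image _ hcoe.continuousOn)
    (t0 : Circ) ⟨t0, ⟨by linarith, by linarith⟩, rfl⟩ ⟨le_rfl, le_rfl⟩ ?_ h
  · ext x
    constructor
    · rintro ⟨t, ht, rfl⟩
      have it : t ∈ Icc (t0 - δ) (t0 + δ) := ⟨by linarith [ht.1], by linarith [ht.2]⟩
      have a1 := (hm.le_iff_le it ip).2 ht.2
      have a2 := (hm.le_iff_le im it).2 ht.1
      have a3 := (ha.le_iff_ge ip it).2 ht.2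
      have a4 := (ha.le_iff_ge it im).2 ht.1
      exact ⟨⟨a1, a4⟩, by simp only; linarith, by simp only; linarith⟩
    · rintro ⟨⟨w1, w2⟩, w3, w4⟩
      simp only at w1 w2 w3 w4
      have := inball (F x) w1 w2 w3 w4
      have hxE : x ∉ E := fun hx => this (Or.inl ⟨x, hx, rfl⟩)
      rw [hE, notMem_compl_iff] at hxE
      obtain ⟨t, ht, rfl⟩ := hxE
      have it : t ∈ Icc (t0 - δ) (t0 + δ) := ⟨ht.1.le, ht.2.le⟩
      exact ⟨t, ⟨(ha.le_iff_ge it im).1 w2, (hm.le_iff_le it ip).1 w1⟩, rfl⟩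
  · intro x hx
    by_contra hh
    simp only [not_or, not_le] at hh
    exact inball (G x) (hx.1.trans m2.le) (hx.2.trans n1.le) hh.1 hh.2 (Or.inr ⟨x, rfl⟩)

structure Cv (f : ℝ → ℝ × ℝ) : Prop where
  per : Function.Periodic f (2 * π)
  c1 : ContDiff ℝ 1 f
  imm : ∀ t, deriv f t ≠ 0
  inj : ∀ s t, f s = f t → cross (deriv f s) (deriv f t) = 0 → (s : Circ) = (t : Circ)

def Mat (f g : ℝ → ℝ × ℝ) (t : ℝ) : Prop :=
  ∃ s, g s = f t ∧ cross (deriv g s) (deriv f t) = 0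

lemma Cv.dper {f : ℝ → ℝ × ℝ} (hf : Cv f) : Function.Periodic (deriv f) (2 * π) := by
  intro t
  have : (fun x => f (x + 2 * π)) = f := funext hf.per
  rw [← deriv_comp_add_const, this]

lemma Cv.dc {f : ℝ → ℝ × ℝ} (hf : Cv f) : Continuous (deriv f) :=
  hf.c1.continuous_deriv le_rfl

lemma Cv.hd {f : ℝ → ℝ × ℝ} (hf : Cv f) (t : ℝ) : HasDerivAt f (deriv f t) t :=
  (hf.c1.differentiable one_ne_zero t).hasDerivAt

lemma Cv.hd1 {f : ℝ → ℝ × ℝ} (hf : Cv f) (t : ℝ) :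
    HasDerivAt (fun t => (f t).1) (deriv f t).1 t :=
  (hasFDerivAt_fst (𝕜 := ℝ) (p := f t)).comp_hasDerivAt t (hf.hd t)

lemma Cv.hd2 {f : ℝ → ℝ × ℝ} (hf : Cv f) (t : ℝ) :
    HasDerivAt (fun t => (f t).2) (deriv f t).2 t :=
  (hasFDerivAt_snd (𝕜 := ℝ) (p := f t)).comp_hasDerivAt t (hf.hd t)

lemma cross_trans (a b c : ℝ × ℝ) (hb : b ≠ 0) (h1 : cross a b = 0) (h2 : cross b c = 0) :
    cross a c = 0 := by
  unfold cross at *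
  by_cases hb1 : b.1 = 0
  · have hb2 : b.2 ≠ 0 := fun h => hb (Prod.ext hb1 h)
    apply mul_left_cancel₀ hb2
    linear_combination a.2 * h2 + c.2 * h1
  · apply mul_left_cancel₀ hb1
    linear_combination a.1 * h2 + c.1 * h1

lemma cross_symm (a b : ℝ × ℝ) (h : cross a b = 0) : cross b a = 0 := by
  unfold cross at *; linarith

lemma cross_cont : Continuous (fun p : (ℝ × ℝ) × (ℝ × ℝ) => cross p.1 p.2) := by
  unfold cross; fun_prop

lemma Cv.rep {g : ℝ → ℝ × ℝ} (hg : Cv g) (c s : ℝ) :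
    ∃ s' ∈ Icc (c - π) (c + π), g s' = g s ∧ deriv g s' = deriv g s := by
  have hp : Function.Periodic (fun t => (g t, deriv g t)) (2 * π) := by
    intro t; simp only [hg.per t, hg.dper t]
  obtain ⟨y, hy, he⟩ := hp.exists_mem_Ico (by positivity) s (c - π)
  simp only [Prod.mk.injEq] at he
  exact ⟨y, ⟨hy.1, by linarith [hy.2]⟩, he.1.symm, he.2.symm⟩

lemma Mat.seq {f g : ℝ → ℝ × ℝ} (hf : Cv f) (hg : Cv g) (c : ℝ) (t : ℕ → ℝ) (t' : ℝ)
    (ht : Tendsto t atTop (𝓝 t')) (hM : ∀ n, Mat f g (t n)) :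
    ∃ (s : ℕ → ℝ) (s' : ℝ) (φ : ℕ → ℕ), StrictMono φ ∧ Tendsto s atTop (𝓝 s') ∧
      s' ∈ Icc (c - π) (c + π) ∧
      (∀ n, g (s n) = f (t (φ n)) ∧ cross (deriv g (s n)) (deriv f (t (φ n))) = 0) ∧
      g s' = f t' ∧ cross (deriv g s') (deriv f t') = 0 := by
  have : ∀ n, ∃ s ∈ Icc (c - π) (c + π), g s = f (t n) ∧ cross (deriv g s) (deriv f (t n)) = 0 := by
    intro n
    obtain ⟨s, hs1, hs2⟩ := hM n
    obtain ⟨s', hs', e1, e2⟩ := hg.rep c s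
    exact ⟨s', hs', by rw [e1, hs1], by rw [e2, hs2]⟩
  choose s hs e1 e2 using this
  obtain ⟨s', hs', φ, hφ, hlim⟩ := isCompact_Icc.tendsto_subseq hs
  have htφ := ht.comp hφ.tendsto_atTop
  refine ⟨s ∘ φ, s', φ, hφ, hlim, hs', fun n => ⟨e1 _, e2 _⟩, ?_, ?_⟩
  · refine tendsto_nhds_unique ((hg.c1.continuous.tendsto s').comp hlim) ?_
    refine ((hf.c1.continuous.tendsto t').comp htφ).congr fun n => (e1 (φ n)).symm
  · have h1 := (hg.dc.tendsto s').comp hlim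
    have h2 := (hf.dc.tendsto t').comp htφ
    have h3 := (cross_cont.tendsto _).comp (h1.prodMk_nhds h2)
    refine tendsto_nhds_unique h3 (tendsto_const_nhds.congr fun n => (e2 (φ n)).symm)

lemma Mat.closed {f g : ℝ → ℝ × ℝ} (hf : Cv f) (hg : Cv g) : IsClosed {t | Mat f g t} := by
  apply IsSeqClosed.isClosed
  intro t t' hM ht
  obtain ⟨s, s', φ, -, -, -, -, h1, h2⟩ := Mat.seq hf hg 0 t t' ht hM
  exact ⟨s', h1, h2⟩

lemma Mat.of_range {f g : ℝ → ℝ × ℝ} (hf : Cv f) (hg : Cv g) (x : ℝ)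
    (h : ∀ᶠ t in 𝓝 x, f t ∈ range g) : Mat f g x := by
  have h' : ∀ᶠ t in 𝓝[>] x, f t ∈ range g := h.filter_mono nhdsWithin_le_nhds
  have hne : ∀ᶠ t in 𝓝[>] x, f t ≠ f x :=
    ((hf.hd x).eventually_ne (hf.imm x)).filter_mono
      (nhdsWithin_mono _ (fun t ht => ne_of_gt ht))
  obtain ⟨t, ht⟩ := exists_seq_tendsto (𝓝[>] x)
  have hev := ht.eventually ((h'.and hne).and self_mem_nhdsWithin)
  obtain ⟨N, hN⟩ := eventually_atTop.1 hev
  have hr : ∀ n, ∃ s ∈ Icc (0 - π) (0 + π), g s = f (t (n + N)) := by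
    intro n
    obtain ⟨s, hs⟩ := (hN (n + N) (by omega)).1.1
    obtain ⟨s', hs', e1, -⟩ := hg.rep 0 s
    exact ⟨s', hs', e1.trans hs⟩
  choose s hs e using hr
  obtain ⟨y, hy, φ, hφ, hlim⟩ := isCompact_Icc.tendsto_subseq hs
  set τ : ℕ → ℝ := fun n => t (φ n + N) with hτ
  have hτl : Tendsto τ atTop (𝓝[>] x) :=
    (ht.comp (tendsto_add_atTop_nat N)).comp hφ.tendsto_atTop
  have hτx : Tendsto τ atTop (𝓝 x) := hτl.mono_right nhdsWithin_le_nhds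
  have eτ : ∀ n, g ((s ∘ φ) n) = f (τ n) := fun n => e (φ n)
  have eτne : ∀ n, f (τ n) ≠ f x := fun n => (hN (φ n + N) (by omega)).1.2
  have hgy : g y = f x := by
    refine tendsto_nhds_unique ((hg.c1.continuous.tendsto y).comp hlim) ?_
    exact ((hf.c1.continuous.tendsto x).comp hτx).congr fun n => (eτ n).symm
  refine ⟨y, hgy, ?_⟩
  have hsne : ∀ n, (s ∘ φ) n ≠ y := by
    intro n hn
    apply eτne n
    rw [← eτ n, hn, hgy]
  have hτne : ∀ n, τ n ≠ x := fun n hn => eτne n (by rw [hn])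
  have l1 : Tendsto (fun n => slope g y ((s ∘ φ) n)) atTop (𝓝 (deriv g y)) :=
    (hasDerivAt_iff_tendsto_slope.1 (hg.hd y)).comp
      (tendsto_nhdsWithin_iff.2 ⟨hlim, Eventually.of_forall hsne⟩)
  have l2 : Tendsto (fun n => slope f x (τ n)) atTop (𝓝 (deriv f x)) :=
    (hasDerivAt_iff_tendsto_slope.1 (hf.hd x)).comp
      (tendsto_nhdsWithin_iff.2 ⟨hτx, Eventually.of_forall hτne⟩)
  have l3 := (cross_cont.tendsto _).comp (l1.prodMk_nhds l2)
  refine tendsto_nhds_unique l3 (tendsto_const_nhds.congr fun n => ?_)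
  simp only [Function.comp, slope_def_module, cross] at *
  rw [eτ n, hgy]
  simp
  ring

lemma loc_inv (k : ℝ → ℝ) (hk : ContDiff ℝ 1 k) (y k' : ℝ) (hd : HasDerivAt k k' y) (hk' : k' ≠ 0) :
    ∃ ψ : ℝ → ℝ, ContDiffAt ℝ 1 ψ (k y) ∧ ψ (k y) = y ∧ (∀ᶠ z in 𝓝 (k y), k (ψ z) = z) ∧
      (∀ᶠ s in 𝓝 y, ψ (k s) = s) := by
  have hf' := hd.hasFDerivAt_equiv hk'
  have hs := (hk.contDiffAt (x := y)).hasStrictFDerivAt' hf' one_ne_zero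
  refine ⟨(hk.contDiffAt (x := y)).localInverse hf' one_ne_zero,
    (hk.contDiffAt (x := y)).to_localInverse hf' one_ne_zero, ?_, ?_, ?_⟩
  · exact (hk.contDiffAt (x := y)).localInverse_apply_image hf' one_ne_zero
  · exact hs.eventually_right_inverse
  · exact hs.eventually_left_inverse

lemma Cv.cd1 {f : ℝ → ℝ × ℝ} (hf : Cv f) : ContDiff ℝ 1 (fun t => (f t).1) := hf.c1.fst

lemma coe_eq_near {x t : ℝ} (h : (x : Circ) = (t : Circ)) (hx : x ∈ Icc (t - π) (t + π)) : x = t := by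
  have hp := Real.pi_pos
  obtain ⟨n, hn⟩ := (QuotientAddGroup.eq_iff_sub_mem.1 h)
  simp only [zsmul_eq_mul] at hn
  have h1 : (n : ℝ) * (2 * π) ≤ π := by linarith [hx.2]
  have h2 : -π ≤ (n : ℝ) * (2 * π) := by linarith [hx.1]
  have h3 : (n : ℝ) < 1 := by by_contra hh; push Not at hh; nlinarith
  have h4 : (-1 : ℝ) < n := by by_contra hh; push Not at hh; nlinarith
  have h5 : n = 0 := by
    have : n < 1 := by exact_mod_cast h3
    have : -1 < n := by exact_mod_cast h4
    omega
  rw [h5] at hn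
  simp at hn
  linarith

lemma local_step {f g : ℝ → ℝ × ℝ} (hf : Cv f) (hg : Cv g)
    (hAf : ∀ t, (deriv f t).1 ≠ 0 → (deriv f t).2 ≠ 0 → Mat f g t)
    (hAg : ∀ t, (deriv g t).1 ≠ 0 → (deriv g t).2 ≠ 0 → Mat g f t)
    (t1 : ℝ) (hM : Mat f g t1) (hd : (deriv f t1).1 ≠ 0)
    (hn : ∀ᶠ t in 𝓝[>] t1, ¬ Mat f g t) : False := by
  have hd1 : ∀ᶠ t in 𝓝 t1, (deriv f t).1 ≠ 0 :=
    (hf.dc.fst.continuousAt (x := t1)).eventually_ne hd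
  have hz : ∀ᶠ t in 𝓝[>] t1, (deriv f t).2 = 0 := by
    filter_upwards [hn, hd1.filter_mono nhdsWithin_le_nhds] with t h1 h2
    by_contra h3
    exact h1 (hAf t h2 h3)
  have hz1 : (deriv f t1).2 = 0 := by
    have l1 : Tendsto (fun t => (deriv f t).2) (𝓝[>] t1) (𝓝 (deriv f t1).2) :=
      (hf.dc.snd.tendsto t1).mono_left nhdsWithin_le_nhds
    exact tendsto_nhds_unique (l1.congr' hz) tendsto_const_nhds
  obtain ⟨y, hy, hcy⟩ := hM
  have hg2 : (deriv g y).2 = 0 := by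
    unfold cross at hcy
    rw [hz1] at hcy
    have : (deriv g y).2 * (deriv f t1).1 = 0 := by linarith
    exact (mul_eq_zero.1 this).resolve_right hd
  have hg1 : (deriv g y).1 ≠ 0 := fun h => hg.imm y (Prod.ext h hg2)
  obtain ⟨ψ, ψc, ψy, ψr, -⟩ := loc_inv _ hg.cd1 y _ (hg.hd1 y) hg1
  simp only [hy] at ψc ψy ψr
  set φ : ℝ → ℝ := fun t => ψ (f t).1 with hφ
  have φt1 : φ t1 = y := ψy
  have f1t : Tendsto (fun t => (f t).1) (𝓝 t1) (𝓝 (f t1).1) := hf.c1.continuous.fst.tendsto t1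
  have φc : ContDiffAt ℝ 1 φ t1 := ContDiffAt.comp t1 (f := fun t => (f t).1) ψc hf.cd1.contDiffAt
  have φt : Tendsto φ (𝓝 t1) (𝓝 y) := by
    have := φc.continuousAt.tendsto; rwa [φt1] at this
  have φd : ∀ᶠ t in 𝓝 t1, ContDiffAt ℝ 1 φ t := φc.eventually (by simp)
  have φr : ∀ᶠ t in 𝓝 t1, (g (φ t)).1 = (f t).1 := f1t.eventually ψr
  have hg1' : ∀ᶠ t in 𝓝 t1, (deriv g (φ t)).1 ≠ 0 :=
    φt.eventually ((hg.dc.fst.continuousAt (x := y)).eventually_ne hg1)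
  obtain ⟨χ, -, -, -, χl⟩ := loc_inv _ hf.cd1 t1 _ (hf.hd1 t1) hd
  -- the second component of the derivative of g vanishes along φ
  have hzero : ∀ᶠ t in 𝓝[>] t1, (deriv g (φ t)).2 = 0 := by
    by_contra hfr
    have hfr' : ∃ᶠ t in 𝓝[>] t1, (deriv g (φ t)).2 ≠ 0 := not_eventually.1 hfr
    have hfr2 := hfr'.and_eventually (hn.and
      (((φr.and hg1').and χl).filter_mono nhdsWithin_le_nhds))
    obtain ⟨t, ht, hp⟩ := exists_seq_forall_of_frequently hfr2
    have htt : Tendsto t atTop (𝓝 t1) := ht.mono_right nhdsWithin_le_nhds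
    have hMg : ∀ n, Mat g f (φ (t n)) := fun n => hAg _ (hp n).2.2.1.2 (hp n).1
    obtain ⟨x, x', σ, hσ, hx, hx', hxe, e1, e2⟩ :=
      Mat.seq hg hf t1 (fun n => φ (t n)) y (φt.comp htt) hMg
    have hxt : x' = t1 := by
      refine coe_eq_near (hf.inj _ _ (e1.trans hy) ?_) hx'
      exact cross_trans _ _ _ (hg.imm y) e2 hcy
    rw [hxt] at hx
    obtain ⟨n, hn⟩ := (hx.eventually χl).exists
    have h1 : (f (x n)).1 = (f (t (σ n))).1 := by
      rw [(hxe n).1]; exact (hp (σ n)).2.2.1.1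
    have h2 : x n = t (σ n) := by
      rw [← hn, h1]; exact (hp (σ n)).2.2.2
    apply (hp (σ n)).2.1
    refine ⟨φ (t (σ n)), ?_, ?_⟩
    · rw [← h2, (hxe n).1, h2]
    · rw [← h2]
      have := cross_symm _ _ (hxe n).2
      rwa [h2] at this ⊢
  have hall : ∀ᶠ t in 𝓝[>] t1, (((deriv g (φ t)).2 = 0 ∧ (deriv f t).2 = 0) ∧ ¬ Mat f g t) ∧
      ContDiffAt ℝ 1 φ t ∧ (g (φ t)).1 = (f t).1 :=
    ((hzero.and hz).and hn).and ((φd.and φr).filter_mono nhdsWithin_le_nhds)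
  obtain ⟨b, hb, hbs⟩ := (mem_nhdsGT_iff_exists_Ioc_subset).1 hall
  have hb' : t1 < b := hb
  have hP : ∀ t ∈ Ioc t1 b, _ := fun t ht => hbs ht
  set q : ℝ → ℝ := fun t => (g (φ t)).2 - (f t).2 with hq
  have qd : ∀ t ∈ Ioc t1 b, HasDerivAt q 0 t := by
    intro t ht
    have h := hP t ht
    have hφd : HasDerivAt φ (deriv φ t) t := (h.2.1.differentiableAt one_ne_zero).hasDerivAt
    have := ((hg.hd2 (φ t)).comp t hφd).sub (hf.hd2 t)
    rw [h.1.1.1, h.1.1.2] at this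
    rw [zero_mul, sub_zero] at this
    exact this
  have qc : ContinuousOn q (Icc t1 b) := by
    intro t ht
    rcases eq_or_lt_of_le ht.1 with h | h
    · subst h
      have : ContinuousAt q t1 :=
        ((hg.c1.continuous.snd.continuousAt).comp φc.continuousAt).sub
          hf.c1.continuous.snd.continuousAt
      exact this.continuousWithinAt
    · exact (qd t ⟨h, ht.2⟩).continuousAt.continuousWithinAt
  obtain ⟨c, -, hc⟩ := exists_hasDerivAt_eq_slope q (fun _ => 0) hb' qc
    (fun t ht => qd t ⟨ht.1, ht.2.le⟩)
  have hqb : q b - q t1 = 0 := by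
    have := hc.symm
    rw [div_eq_zero_iff] at this
    rcases this with h | h
    · exact h
    · linarith
  have hqt : q t1 = 0 := by simp only [hq, φt1, hy, sub_self]
  have hb2 := hP b ⟨hb', le_rfl⟩
  refine hb2.1.2 ⟨φ b, Prod.ext hb2.2.2 ?_, ?_⟩
  · have : q b = 0 := by linarith
    simp only [hq] at this
    linarith
  · unfold cross
    rw [hb2.1.1.1, hb2.1.1.2]; ring

lemma Cv.hd_swap {f : ℝ → ℝ × ℝ} (hf : Cv f) (t : ℝ) :
    deriv (fun t => (f t).swap) t = (deriv f t).swap :=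
  ((hf.hd2 t).prodMk (hf.hd1 t)).deriv

lemma cross_swap (a b : ℝ × ℝ) : cross a.swap b.swap = - cross a b := by
  simp only [cross, Prod.fst_swap, Prod.snd_swap]; ring

lemma Cv.swap {f : ℝ → ℝ × ℝ} (hf : Cv f) : Cv (fun t => (f t).swap) where
  per t := by simp only [hf.per t]
  c1 := hf.c1.snd.prodMk hf.c1.fst
  imm t h := by
    rw [hf.hd_swap] at h
    exact hf.imm t (Prod.swap_injective (by simpa using h))
  inj s t h1 h2 := by
    rw [hf.hd_swap, hf.hd_swap, cross_swap] at h2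
    exact hf.inj s t (Prod.swap_injective h1) (by linarith)

lemma Mat.swap {f g : ℝ → ℝ × ℝ} (hf : Cv f) (hg : Cv g) (t : ℝ) :
    Mat (fun t => (f t).swap) (fun t => (g t).swap) t ↔ Mat f g t := by
  unfold Mat
  simp only [hf.hd_swap, hg.hd_swap, cross_swap, neg_eq_zero, Prod.swap_inj]

lemma Cv.exists_generic {f : ℝ → ℝ × ℝ} (hf : Cv f) :
    ∃ t, (deriv f t).1 ≠ 0 ∧ (deriv f t).2 ≠ 0 := by
  by_contra hno
  push Not at hno
  have ex : ∀ k k' : ℝ → ℝ, Function.Periodic k (2 * π) → (∀ t, HasDerivAt k (k' t) t) →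
      ∃ t, k' t = 0 := by
    intro k k' hk hd
    obtain ⟨c, -, hc⟩ := exists_hasDerivAt_eq_zero (f := k) (f' := k') (a := 0) (b := 2 * π)
      (by positivity) (fun t _ => (hd t).continuousAt.continuousWithinAt)
      (by have := hk 0; rw [zero_add] at this; exact this.symm) (fun t _ => hd t)
    exact ⟨c, hc⟩
  obtain ⟨a, ha⟩ := ex _ _ (fun t => by simp only [hf.per t]) hf.hd1
  obtain ⟨b, hb⟩ := ex _ _ (fun t => by simp only [hf.per t]) hf.hd2
  obtain ⟨z, -, hz1, hz2⟩ := isPreconnected_closed_iff.1 (isPreconnected_univ (α := ℝ))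
    {t | (deriv f t).1 = 0} {t | (deriv f t).2 = 0}
    (isClosed_eq hf.dc.fst continuous_const) (isClosed_eq hf.dc.snd continuous_const)
    (fun t _ => by
      by_cases h : (deriv f t).1 = 0
      · exact Or.inl h
      · exact Or.inr (hno t h)) ⟨a, trivial, ha⟩ ⟨b, trivial, hb⟩
  exact hf.imm z (Prod.ext hz1 hz2)

lemma Mat.all {f g : ℝ → ℝ × ℝ} (hf : Cv f) (hg : Cv g)
    (hAf : ∀ t, (deriv f t).1 ≠ 0 → (deriv f t).2 ≠ 0 → Mat f g t)
    (hAg : ∀ t, (deriv g t).1 ≠ 0 → (deriv g t).2 ≠ 0 → Mat g f t) (t0 : ℝ) : Mat f g t0 := by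
  by_contra hn
  obtain ⟨t, ht1, ht2⟩ := hf.exists_generic
  have hp : Function.Periodic (fun t => (f t, deriv f t)) (2 * π) := by
    intro t; simp only [hf.per t, hf.dper t]
  obtain ⟨a, ha, hae⟩ := hp.exists_mem_Ico (by positivity) t (t0 - 2 * π)
  simp only [Prod.mk.injEq] at hae
  have haM : Mat f g a := hAf a (hae.2 ▸ ht1) (hae.2 ▸ ht2)
  have hat : a ≤ t0 := by linarith [ha.2]
  set S := {t | Mat f g t} ∩ Iic t0 with hS
  have hSc : IsClosed S := (Mat.closed hf hg).inter isClosed_Iic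
  have hSb : BddAbove S := ⟨t0, fun t ht => ht.2⟩
  have hSn : S.Nonempty := ⟨a, haM, hat⟩
  have hmem := hSc.csSup_mem hSn hSb
  set t1 := sSup S with ht1
  have hlt : t1 < t0 := lt_of_le_of_ne hmem.2 (fun h => hn (h ▸ hmem.1))
  have hev : ∀ᶠ t in 𝓝[>] t1, ¬ Mat f g t := by
    filter_upwards [Ioo_mem_nhdsGT hlt] with t ht hM
    exact absurd (le_csSup hSb ⟨hM, ht.2.le⟩) (not_le.2 ht.1)
  by_cases hd : (deriv f t1).1 = 0
  · have hd2 : (deriv f t1).2 ≠ 0 := fun h => hf.imm t1 (Prod.ext hd h)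
    refine local_step hf.swap hg.swap ?_ ?_ t1 ((Mat.swap hf hg t1).2 hmem.1) ?_ ?_
    · intro t h1 h2
      rw [hf.hd_swap] at h1 h2
      exact (Mat.swap hf hg t).2 (hAf t h2 h1)
    · intro t h1 h2
      rw [hg.hd_swap] at h1 h2
      exact (Mat.swap hg hf t).2 (hAg t h2 h1)
    · rw [hf.hd_swap]; exact hd2
    · filter_upwards [hev] with t ht
      rwa [Mat.swap hf hg]
  · exact local_step hf hg hAf hAg t1 hmem.1 hd hev

lemma Cv.mat_unique {f g : ℝ → ℝ × ℝ} (hf : Cv f) (hg : Cv g) {t t' s s' : ℝ}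
    (ht : (t : Circ) = (t' : Circ))
    (h1 : g s = f t) (h2 : cross (deriv g s) (deriv f t) = 0)
    (h1' : g s' = f t') (h2' : cross (deriv g s') (deriv f t') = 0) : (s : Circ) = (s' : Circ) := by
  obtain ⟨n, hn⟩ := (QuotientAddGroup.eq_iff_sub_mem.1 ht)
  simp only [zsmul_eq_mul] at hn
  have e : t = t' + n * (2 * π) := by linarith
  have e1 : f t = f t' := by rw [e]; exact hf.per.int_mul n t'
  have e2 : deriv f t = deriv f t' := by rw [e]; exact hf.dper.int_mul n t'
  refine hg.inj _ _ (by rw [h1, h1', e1]) ?_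
  rw [e2] at h2
  exact cross_trans _ _ _ (hf.imm t') h2 (cross_symm _ _ h2')

lemma exists_diffeo {f g : ℝ → ℝ × ℝ} (hf : Cv f) (hg : Cv g) (hM : ∀ t, Mat f g t) :
    ∃ H : Circ → Circ, CircleDiffeo H ∧ ∀ t : ℝ, ∃ s : ℝ, H t = s ∧ g s = f t := by
  have hcoe : Continuous ((↑) : ℝ → Circ) := AddCircle.continuous_mk' _
  set K : Set (ℝ × ℝ) := (Icc (0 - π) (0 + π) ×ˢ Icc (0 - π) (0 + π)) ∩
    {p | g p.2 = f p.1 ∧ cross (deriv g p.2) (deriv f p.1) = 0} with hK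
  have hKc : IsCompact K := by
    refine (isCompact_Icc.prod isCompact_Icc).inter_right ?_
    refine (isClosed_eq (hg.c1.continuous.comp continuous_snd)
      (hf.c1.continuous.comp continuous_fst)).inter (isClosed_eq ?_ continuous_const)
    exact cross_cont.comp ((hg.dc.comp continuous_snd).prodMk (hf.dc.comp continuous_fst))
  set Γ : Set (Circ × Circ) := (fun p : ℝ × ℝ => ((p.1 : Circ), (p.2 : Circ))) '' K with hΓ
  have hΓc : IsCompact Γ := hKc.image
    ((hcoe.comp continuous_fst).prodMk (hcoe.comp continuous_snd))
  have hex : ∀ t : ℝ, ∃ t' s' : ℝ, (t' : Circ) = t ∧ (t', s') ∈ K := by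
    intro t
    have hp : Function.Periodic (fun t : ℝ => (t : Circ)) (2 * π) :=
      fun t => AddCircle.coe_add_period _ t
    obtain ⟨t', ht', he⟩ := hp.exists_mem_Ico (by positivity) t (0 - π)
    obtain ⟨s, h1, h2⟩ := hM t'
    obtain ⟨s', hs', e1, e2⟩ := hg.rep 0 s
    refine ⟨t', s', he.symm, ⟨⟨ht'.1, ?_⟩, hs'⟩, ?_, ?_⟩
    · have := ht'.2; simp only at *; linarith
    · simp only [e1, h1]
    · simp only [e2, h2]
  have hHex : ∀ x : Circ, ∃ y : Circ, (x, y) ∈ Γ := by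
    intro x
    obtain ⟨t, rfl⟩ := QuotientAddGroup.mk_surjective x
    obtain ⟨t', s', h1, h2⟩ := hex t
    exact ⟨s', (t', s'), h2, by rw [Prod.mk.injEq]; exact ⟨h1, rfl⟩⟩
  choose H hH using hHex
  have huniq : ∀ x y, (x, y) ∈ Γ → y = H x := by
    intro x y hxy
    obtain ⟨⟨t, s⟩, hk, he⟩ := hxy
    obtain ⟨⟨t', s'⟩, hk', he'⟩ := hH x
    simp only [Prod.mk.injEq] at he he'
    rw [← he.2, ← he'.2]
    exact hf.mat_unique hg (he.1.trans he'.1.symm) hk.2.1 hk.2.2 hk'.2.1 hk'.2.2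
  have hHc : Continuous H := by
    refine continuous_iff_isClosed.2 fun C hC => ?_
    have : H ⁻¹' C = Prod.fst '' (Γ ∩ Prod.snd ⁻¹' C) := by
      ext x
      constructor
      · intro hx
        exact ⟨(x, H x), ⟨hH x, hx⟩, rfl⟩
      · rintro ⟨⟨x', y⟩, ⟨h1, h2⟩, rfl⟩
        have := huniq _ _ h1
        simp only [mem_preimage] at *
        rwa [← this]
    rw [this]
    exact ((hΓc.inter_right (hC.preimage continuous_snd)).image continuous_fst).isClosed
  -- characterisation
  have hchar : ∀ t s : ℝ, H t = s → g s = f t ∧ cross (deriv g s) (deriv f t) = 0 := by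
    intro t s hts
    obtain ⟨⟨t', s'⟩, hk, he⟩ := hH t
    simp only [Prod.mk.injEq] at he
    have hs := he.2.trans hts
    obtain ⟨n, hn⟩ := (QuotientAddGroup.eq_iff_sub_mem.1 he.1)
    obtain ⟨m, hm⟩ := (QuotientAddGroup.eq_iff_sub_mem.1 hs)
    simp only [zsmul_eq_mul] at hn hm
    have en : t' = t + n * (2 * π) := by linarith
    have em : s' = s + m * (2 * π) := by linarith
    obtain ⟨-, k1, k2⟩ := hk
    simp only [en, em, hf.per.int_mul n t, hg.per.int_mul m s] at k1
    simp only [en, em, hf.dper.int_mul n t, hg.dper.int_mul m s] at k2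
    exact ⟨k1, k2⟩
  -- lift
  obtain ⟨e0, he0⟩ := QuotientAddGroup.mk_surjective (H ((0 : ℝ) : Circ))
  obtain ⟨hc, ⟨-, hlift⟩, -⟩ := (AddCircle.isCoveringMap_coe (2 * π)).existsUnique_continuousMap_lifts
    (⟨fun t : ℝ => H t, hHc.comp hcoe⟩ : C(ℝ, Circ)) 0 e0 he0
  set h : ℝ → ℝ := fun t => hc t with hh
  have hcont : Continuous h := hc.continuous
  have hl : ∀ t : ℝ, H t = (h t : Circ) := fun t => (congrFun hlift t).symm
  have hgh : ∀ t, g (h t) = f t := fun t => (hchar t _ (hl t)).1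
  have hcr : ∀ t, cross (deriv g (h t)) (deriv f t) = 0 := fun t => (hchar t _ (hl t)).2
  have hC1 : ContDiff ℝ 1 h := by
    refine contDiff_iff_contDiffAt.2 fun t => ?_
    have main : ∀ (k k' : ℝ → ℝ) (l : ℝ → ℝ), ContDiff ℝ 1 k → (∀ s, HasDerivAt k (k' s) s) →
        k' (h t) ≠ 0 → ContDiff ℝ 1 l → (∀ t, k (h t) = l t) → ContDiffAt ℝ 1 h t := by
      intro k k' l hk hkd hne hlc hkl
      obtain ⟨ψ, ψc, -, -, ψl⟩ := loc_inv k hk (h t) _ (hkd _) hne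
      rw [hkl] at ψc
      have hcomp : ContDiffAt ℝ 1 (fun t => ψ (l t)) t := ContDiffAt.comp t ψc hlc.contDiffAt
      refine hcomp.congr_of_eventuallyEq ?_
      filter_upwards [(hcont.tendsto t).eventually ψl] with τ hτ
      rw [← hkl, hτ]
    by_cases hd : (deriv g (h t)).1 = 0
    · have hd2 : (deriv g (h t)).2 ≠ 0 := fun h' => hg.imm _ (Prod.ext hd h')
      exact main _ _ _ hg.c1.snd hg.hd2 hd2 hf.c1.snd (fun t => by rw [hgh])
    · exact main _ _ _ hg.c1.fst hg.hd1 hd hf.c1.fst (fun t => by rw [hgh])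
  have hdiff : ∀ t, HasDerivAt h (deriv h t) t :=
    fun t => (hC1.differentiable one_ne_zero t).hasDerivAt
  have hne : ∀ t, deriv h t ≠ 0 := by
    intro t h0
    have h1 := (hg.hd (h t)).scomp t (hdiff t)
    have h2 : g ∘ h = f := funext hgh
    rw [h2, h0, zero_smul] at h1
    exact hf.imm t h1.deriv
  have hinj : ∀ a b, a < b → h a ≠ h b := by
    intro a b hab heq
    obtain ⟨c, -, hc⟩ := exists_hasDerivAt_eq_zero hab hcont.continuousOn heq
      (fun t _ => hdiff t)
    exact hne c hc
  have hcinj : ∀ a b : ℝ, (h a : Circ) = (h b : Circ) → (a : Circ) = (b : Circ) := by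
    intro a b hab
    exact hg.mat_unique hf hab (hgh a).symm (cross_symm _ _ (hcr a)) (hgh b).symm
      (cross_symm _ _ (hcr b))
  -- period
  have hper : ∀ t, ∃ n : ℤ, h (t + 2 * π) - h t = n * (2 * π) := by
    intro t
    have : ((h (t + 2 * π) : ℝ) : Circ) = ((h t : ℝ) : Circ) := by
      rw [← hl, ← hl, AddCircle.coe_add_period]
    obtain ⟨n, hn⟩ := (QuotientAddGroup.eq_iff_sub_mem.1 this)
    simp only [zsmul_eq_mul] at hn
    exact ⟨n, hn.symm⟩
  have hpi := Real.pi_pos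
  have hval : ∀ t, h (t + 2 * π) = h t + 2 * π ∨ h (t + 2 * π) = h t - 2 * π := by
    intro t
    obtain ⟨n, hn⟩ := hper t
    have no : ∀ s ∈ Ioo t (t + 2 * π), (h s : Circ) ≠ (h t : Circ) := by
      intro s hs heq
      have := hcinj _ _ heq
      obtain ⟨m, hm⟩ := (QuotientAddGroup.eq_iff_sub_mem.1 this)
      simp only [zsmul_eq_mul] at hm
      have h1 : (0 : ℝ) < m := by by_contra h'; push Not at h'; nlinarith [hs.1]
      have h2 : (m : ℝ) < 1 := by by_contra h'; push Not at h'; nlinarith [hs.2]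
      have h3 : 0 < m := by exact_mod_cast h1
      have h4 : m < 1 := by exact_mod_cast h2
      omega
    have hle : t ≤ t + 2 * π := by linarith
    rcases lt_trichotomy n 0 with hn0 | hn0 | hn0
    · by_cases hn1 : n = -1
      · right; rw [hn1] at hn; push_cast at hn; linarith
      · exfalso
        have hn2 : n ≤ -2 := by omega
        have hn3 : (n : ℝ) ≤ -2 := by exact_mod_cast hn2
        obtain ⟨s, hs, hse⟩ := intermediate_value_Ioo' hle hcont.continuousOn
          (show h t - 2 * π ∈ Ioo (h (t + 2 * π)) (h t) from ⟨by nlinarith, by linarith⟩)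
        exact no s hs (by rw [hse, AddCircle.coe_sub, AddCircle.coe_period, sub_zero])
    · exfalso
      rw [hn0] at hn
      refine hinj t (t + 2 * π) (by linarith) ?_
      push_cast at hn; linarith
    · by_cases hn1 : n = 1
      · left; rw [hn1] at hn; push_cast at hn; linarith
      · exfalso
        have hn2 : 2 ≤ n := by omega
        have hn3 : (2 : ℝ) ≤ n := by exact_mod_cast hn2
        obtain ⟨s, hs, hse⟩ := intermediate_value_Ioo hle hcont.continuousOn
          (show h t + 2 * π ∈ Ioo (h t) (h (t + 2 * π)) from ⟨by linarith, by nlinarith⟩)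
        exact no s hs (by rw [hse]; exact AddCircle.coe_add_period _ _)
  have hper2 : (∀ t, h (t + 2 * π) = h t + 2 * π) ∨ (∀ t, h (t + 2 * π) = h t - 2 * π) := by
    by_contra hno
    push Not at hno
    obtain ⟨⟨a, ha⟩, b, hb⟩ := hno
    have hs : Continuous (fun t => h (t + 2 * π)) := hcont.comp (by fun_prop)
    obtain ⟨z, -, hz1, hz2⟩ := isPreconnected_closed_iff.1 (isPreconnected_univ (α := ℝ))
      {t | h (t + 2 * π) = h t + 2 * π} {t | h (t + 2 * π) = h t - 2 * π}
      (isClosed_eq hs (by fun_prop)) (isClosed_eq hs (by fun_prop))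
      (fun t _ => hval t) ⟨b, trivial, (hval b).resolve_right hb⟩
      ⟨a, trivial, (hval a).resolve_left ha⟩
    have e1 : h (z + 2 * π) = h z + 2 * π := hz1
    have e2 : h (z + 2 * π) = h z - 2 * π := hz2
    linarith
  exact ⟨H, ⟨h, hC1, hne, hper2, hl⟩, fun t => ⟨h t, hl t, hgh t⟩⟩

lemma image_mem (F G : Circ → ℝ × ℝ) (hF : Continuous F) (hG : Continuous G) (t0 : ℝ)
    (h1 : ContDiff ℝ 1 (fun t : ℝ => (F (t : Circ)).1))
    (h2 : ContDiff ℝ 1 (fun t : ℝ => (F (t : Circ)).2))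
    (d1 : 0 < deriv (fun t : ℝ => (F (t : Circ)).1) t0)
    (d2 : deriv (fun t : ℝ => (F (t : Circ)).2) t0 < 0)
    (hs : ∀ x : Circ, F x = F (t0 : Circ) → x = (t0 : Circ))
    (h : ∀ u v : ℝ × ℝ, u.1 < v.1 → u.2 < v.2 → persBetti F u v = persBetti G u v) :
    F (t0 : Circ) ∈ range G := by
  by_contra hn
  have c1 := h1.continuous_deriv le_rfl
  have c2 := h2.continuous_deriv le_rfl
  have e1 : ∀ᶠ t in 𝓝 t0, 0 < deriv (fun t : ℝ => (F (t : Circ)).1) t :=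
    c1.continuousAt.eventually (lt_mem_nhds d1)
  have e2 : ∀ᶠ t in 𝓝 t0, deriv (fun t : ℝ => (F (t : Circ)).2) t < 0 :=
    c2.continuousAt.eventually (gt_mem_nhds d2)
  obtain ⟨r, hr, hb⟩ := Metric.eventually_nhds_iff.1 (e1.and e2)
  have hin : ∀ t ∈ interior (Icc (t0 - r) (t0 + r)), dist t t0 < r := by
    intro t ht
    rw [interior_Icc] at ht
    rw [Real.dist_eq, abs_lt]
    constructor <;> linarith [ht.1, ht.2]
  refine image_contra F G hF hG t0 r hr ?_ ?_ hs hn h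
  · exact strictMonoOn_of_deriv_pos (convex_Icc _ _) h1.continuous.continuousOn
      fun t ht => (hb (hin t ht)).1
  · exact strictAntiOn_of_deriv_neg (convex_Icc _ _) h2.continuous.continuousOn
      fun t ht => (hb (hin t ht)).2

lemma Generic.cont {F : Circ → ℝ × ℝ} (hF : Generic F) : Continuous F := by
  have : IsQuotientMap ((↑) : ℝ → Circ) := isQuotientMap_quotient_mk'
  exact this.continuous_iff.2 hF.1.continuous

lemma Generic.cv {F : Circ → ℝ × ℝ} (hF : Generic F) : Cv (liftOf F) where
  per t := by simp only [liftOf, AddCircle.coe_add_period]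
  c1 := hF.1
  imm := hF.2.1
  inj s t h1 h2 := by
    refine hF.2.2.2.2 s t h1 ?_
    have hs := hF.2.1 s
    have ht := hF.2.1 t
    unfold tangentAt
    generalize deriv (liftOf F) s = a at *
    generalize deriv (liftOf F) t = b at *
    obtain ⟨c, hc⟩ : ∃ c : ℝ, a = c • b := by
      unfold cross at h2
      by_cases hb : b.1 = 0
      · have hb2 : b.2 ≠ 0 := fun h' => ht (Prod.ext hb h')
        refine ⟨a.2 / b.2, Prod.ext ?_ ?_⟩
        · simp only [Prod.smul_fst, smul_eq_mul]; field_simp; linarith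
        · simp only [Prod.smul_snd, smul_eq_mul]; field_simp
      · refine ⟨a.1 / b.1, Prod.ext ?_ ?_⟩
        · simp only [Prod.smul_fst, smul_eq_mul]; field_simp
        · simp only [Prod.smul_snd, smul_eq_mul]; field_simp; linarith
    have hc0 : c ≠ 0 := by
      rintro rfl
      exact hs (by rw [hc, zero_smul])
    rw [hc]
    exact Submodule.span_singleton_smul_eq (IsUnit.mk0 c hc0) b

lemma Generic.bad_countable {F : Circ → ℝ × ℝ} (hF : Generic F) :
    {t : ℝ | ∃ x : Circ, F x = F t ∧ x ≠ t}.Countable := by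
  obtain ⟨-, -, hfin, htwo, -⟩ := hF
  set P := {p : ℝ × ℝ | ∃ x y : Circ, x ≠ y ∧ F x = p ∧ F y = p} with hP
  have hB : (⋃ p ∈ P, {z : Circ | F z = p}).Finite := by
    refine hfin.biUnion fun p hp => ?_
    obtain ⟨x, y, -, he⟩ := htwo p hp
    rw [he]
    exact (finite_singleton y).insert x
  have hfib : ∀ x : Circ, {t : ℝ | (t : Circ) = x}.Countable := by
    intro x
    obtain ⟨t, rfl⟩ := QuotientAddGroup.mk_surjective x
    refine (countable_range (fun n : ℤ => t + n * (2 * π))).mono ?_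
    intro s hs
    obtain ⟨n, hn⟩ := (QuotientAddGroup.eq_iff_sub_mem.1 hs)
    simp only [zsmul_eq_mul] at hn
    exact ⟨n, by simp only; linarith⟩
  refine (hB.countable.biUnion (fun x _ => hfib x)).mono ?_
  rintro t ⟨x, hx, hxt⟩
  simp only [mem_iUnion]
  exact ⟨(t : Circ), ⟨F t, ⟨x, t, hxt, hx, rfl⟩, rfl⟩, rfl⟩

lemma claimA {F G : Circ → ℝ × ℝ} (hF : Generic F) (hG : Generic G)
    (h : ∀ s ∈ Sigma2, ∀ u v : ℝ × ℝ, u.1 < v.1 → u.2 < v.2 →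
      persBetti (s ∘ F) u v = persBetti (s ∘ G) u v) (t : ℝ)
    (ht1 : (deriv (liftOf F) t).1 ≠ 0) (ht2 : (deriv (liftOf F) t).2 ≠ 0) :
    Mat (liftOf F) (liftOf G) t := by
  have cF := hF.cv
  have cG := hG.cv
  have hrange : range (liftOf G) = range G := by
    ext p
    constructor
    · rintro ⟨t, rfl⟩; exact ⟨t, rfl⟩
    · rintro ⟨x, rfl⟩
      obtain ⟨t, rfl⟩ := QuotientAddGroup.mk_surjective x
      exact ⟨t, rfl⟩
  set A : Set ℝ := {t | (deriv (liftOf F) t).1 ≠ 0 ∧ (deriv (liftOf F) t).2 ≠ 0} with hA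
  have hAo : IsOpen A := (isOpen_ne_fun cF.dc.fst continuous_const).inter
    (isOpen_ne_fun cF.dc.snd continuous_const)
  have hcl : IsClosed {t : ℝ | liftOf F t ∈ range G} :=
    (isCompact_range hG.cont).isClosed.preimage cF.c1.continuous
  have hdense := hF.bad_countable.dense_compl ℝ
  have hsub : A ∩ {t : ℝ | ∃ x : Circ, F x = F t ∧ x ≠ t}ᶜ ⊆ {t : ℝ | liftOf F t ∈ range G} := by
    rintro τ ⟨⟨h1, h2⟩, h3⟩
    have hs : ∀ x : Circ, F x = F τ → x = τ := by
      intro x hx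
      by_contra hne
      exact h3 ⟨x, hx, hne⟩
    have f1 : ContDiff ℝ 1 (fun t : ℝ => (F t).1) := cF.c1.fst
    have f2 : ContDiff ℝ 1 (fun t : ℝ => (F t).2) := cF.c1.snd
    have e1 : deriv (fun t : ℝ => (F t).1) τ = (deriv (liftOf F) τ).1 := (cF.hd1 τ).deriv
    have e2 : deriv (fun t : ℝ => (F t).2) τ = (deriv (liftOf F) τ).2 := (cF.hd2 τ).deriv
    rw [← e1] at h1
    rw [← e2] at h2
    have cF' := hF.cont
    have cG' := hG.cont
    show F τ ∈ range G
    rcases lt_or_gt_of_ne h1 with p1 | p1 <;> rcases lt_or_gt_of_ne h2 with p2 | p2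
    · obtain ⟨y, hy⟩ := image_mem ((fun p : ℝ × ℝ => (-p.1, p.2)) ∘ F)
        ((fun p : ℝ × ℝ => (-p.1, p.2)) ∘ G)
        (by fun_prop) (by fun_prop) τ f1.neg f2
        (by simp only [Function.comp, deriv.fun_neg]; linarith) p2
        (fun x hx => hs x (by
          simp only [Function.comp, Prod.mk.injEq, neg_inj] at hx
          exact Prod.ext hx.1 hx.2))
        (h _ (by simp [Sigma2]))
      simp only [Function.comp, Prod.mk.injEq, neg_inj] at hy
      exact ⟨y, Prod.ext hy.1 hy.2⟩
    · obtain ⟨y, hy⟩ := image_mem ((fun p : ℝ × ℝ => (-p.1, -p.2)) ∘ F)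
        ((fun p : ℝ × ℝ => (-p.1, -p.2)) ∘ G)
        (by fun_prop) (by fun_prop) τ f1.neg f2.neg
        (by simp only [Function.comp, deriv.fun_neg]; linarith)
        (by simp only [Function.comp, deriv.fun_neg]; linarith)
        (fun x hx => hs x (by
          simp only [Function.comp, Prod.mk.injEq, neg_inj] at hx
          exact Prod.ext hx.1 hx.2))
        (h _ (by simp [Sigma2]))
      simp only [Function.comp, Prod.mk.injEq, neg_inj] at hy
      exact ⟨y, Prod.ext hy.1 hy.2⟩
    · exact image_mem F G cF' cG' τ f1 f2 p1 p2 hs (h id (by simp [Sigma2]))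
    · obtain ⟨y, hy⟩ := image_mem ((fun p : ℝ × ℝ => (p.1, -p.2)) ∘ F)
        ((fun p : ℝ × ℝ => (p.1, -p.2)) ∘ G)
        (by fun_prop) (by fun_prop) τ f1 f2.neg
        p1 (by simp only [Function.comp, deriv.fun_neg]; linarith)
        (fun x hx => hs x (by
          simp only [Function.comp, Prod.mk.injEq, neg_inj] at hx
          exact Prod.ext hx.1 hx.2))
        (h _ (by simp [Sigma2]))
      simp only [Function.comp, Prod.mk.injEq, neg_inj] at hy
      exact ⟨y, Prod.ext hy.1 hy.2⟩
  have hAs : A ⊆ {t : ℝ | liftOf F t ∈ range G} :=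
    (hdense.open_subset_closure_inter hAo).trans (hcl.closure_subset_iff.2 hsub)
  refine Mat.of_range cF cG t ?_
  rw [hrange]
  filter_upwards [hAo.mem_nhds ⟨ht1, ht2⟩] with τ hτ
  exact hAs hτ

/-- Corollary: if continuous `f, g` are approximated by generic `f', g'` whose persistent
Betti numbers (after composing with every reflection in `Σ₂`) coincide on `Δ⁺`, then
there is a C¹-diffeomorphism `h` of the circle with
`‖g∘h − f‖_∞ ≤ ‖g − g'‖_∞ + ‖f' − f‖_∞`. -/
theorem approx_uniqueness (F G : Circ → ℝ × ℝ) (hF : Continuous F) (hG : Continuous G)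
    (F' G' : Circ → ℝ × ℝ) (hF' : Generic F') (hG' : Generic G')
    (h : ∀ s ∈ Sigma2, ∀ u v : ℝ × ℝ, u.1 < v.1 → u.2 < v.2 →
      persBetti (s ∘ F') u v = persBetti (s ∘ G') u v) :
    ∃ H : Circ → Circ, CircleDiffeo H ∧
      (⨆ x : Circ, ‖G (H x) - F x‖) ≤
        (⨆ x : Circ, ‖G x - G' x‖) + (⨆ x : Circ, ‖F' x - F x‖) := by

  have cF := hF'.cv
  have cG := hG'.cv
  have hM := Mat.all cF cG (claimA hF' hG' h)
    (claimA hG' hF' (fun s hs u v h1 h2 => (h s hs u v h1 h2).symm))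
  obtain ⟨H, hH, hHe⟩ := exists_diffeo cF cG hM
  refine ⟨H, hH, ?_⟩
  have b1 : BddAbove (range fun x : Circ => ‖G x - G' x‖) :=
    (isCompact_range (hG.sub hG'.cont).norm).bddAbove
  have b2 : BddAbove (range fun x : Circ => ‖F' x - F x‖) :=
    (isCompact_range (hF'.cont.sub hF).norm).bddAbove
  refine ciSup_le fun x => ?_
  have hx : G' (H x) = F' x := by
    obtain ⟨t, rfl⟩ := QuotientAddGroup.mk_surjective x
    obtain ⟨s, h1, h2⟩ := hHe t
    exact (congrArg G' h1).trans h2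
  have e : G (H x) - F x = (G (H x) - G' (H x)) + (F' x - F x) := by rw [hx]; abel
  rw [e]
  exact (norm_add_le _ _).trans (add_le_add (le_ciSup b1 (H x)) (le_ciSup b2 x))
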